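/- Let L be a connected complex reductive group and U₁ ≠ 0, U₂ ≠ 0, U₃ finite-dimensional rational L-modules. Suppose that a Borel subgroup of L × (ℂ*)², acting on (U₁ ⊗ U₂) ⊕ U₃ with the two ℂ*-factors acting by scalars on U₁⊗U₂ and on U₃ respectively, has a dense orbit. Then a Borel subgroup of L × (ℂ*)³, acting on U₁ ⊕ U₂ ⊕ U₃ with the three ℂ*-factors acting by scalars on U₁, U₂ and U₃ respectively, has a dense orbit. -/

import Mathlib

/-- A Zariski-closed subset of the space of `N×N` complex matrices. -/
def ZClosedMat {N : ℕ} (s : Set (Matrix (Fin N) (Fin N) ℂ)) : Prop :=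
  ∃ I : Set (MvPolynomial (Fin N × Fin N) ℂ),
    s = {A | ∀ p ∈ I, MvPolynomial.eval (fun ij => A ij.1 ij.2) p = 0}

/-- A (Zariski-closed) linear algebraic group of `N×N` complex matrices. -/
structure LinAlgGroup (N : ℕ) where
  carrier : Set (Matrix (Fin N) (Fin N) ℂ)
  one_mem : 1 ∈ carrier
  mul_mem : ∀ A ∈ carrier, ∀ B ∈ carrier, A * B ∈ carrier
  unit : ∀ A ∈ carrier, IsUnit A
  inv_mem : ∀ A ∈ carrier, A⁻¹ ∈ carrier
  closed : ZClosedMat carrier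

/-- Connectedness (= Zariski irreducibility) of a linear algebraic group. -/
def IsZConnected {N : ℕ} (G : LinAlgGroup N) : Prop :=
  ∀ p q : MvPolynomial (Fin N × Fin N) ℂ,
    (∀ A ∈ G.carrier, MvPolynomial.eval (fun ij => A ij.1 ij.2) p *
        MvPolynomial.eval (fun ij => A ij.1 ij.2) q = 0) →
    (∀ A ∈ G.carrier, MvPolynomial.eval (fun ij => A ij.1 ij.2) p = 0) ∨
    (∀ A ∈ G.carrier, MvPolynomial.eval (fun ij => A ij.1 ij.2) q = 0)

/-- Iterated commutator sets: depth-`n` values of the iterated commutator word. -/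
def commSet {M : Type*} [Monoid M] [Inv M] : ℕ → Set M → Set M
  | 0, s => s
  | (k + 1), s =>
      {m | ∃ a ∈ commSet k s, ∃ b ∈ commSet k s, m = a * b * a⁻¹ * b⁻¹}

/-- Solvability of a matrix group: some iterated commutator set is trivial. -/
def IsSolvSet {M : Type*} [Monoid M] [Inv M] (s : Set M) : Prop :=
  ∃ n : ℕ, commSet n s ⊆ {1}

/-- `B` is a Borel subgroup of `G`: a maximal closed connected solvable subgroup. -/
def IsBorel {N : ℕ} (G B : LinAlgGroup N) : Prop :=
  B.carrier ⊆ G.carrier ∧ IsZConnected B ∧ IsSolvSet B.carrier ∧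
  ∀ B' : LinAlgGroup N, B'.carrier ⊆ G.carrier → IsZConnected B' →
    IsSolvSet B'.carrier → B.carrier ⊆ B'.carrier → B'.carrier = B.carrier

/-- `G` is reductive: it has no nontrivial closed connected normal unipotent subgroup. -/
def IsReductive {N : ℕ} (G : LinAlgGroup N) : Prop :=
  ∀ H : LinAlgGroup N, H.carrier ⊆ G.carrier →
    (∀ g ∈ G.carrier, ∀ h ∈ H.carrier, g * h * g⁻¹ ∈ H.carrier) →
    IsZConnected H →
    (∀ A ∈ H.carrier, (A - 1) ^ N = 0) →
    H.carrier = {1}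

/-- A rational (finite-dimensional) representation of `G` on `ℂᵈ`: a homomorphism whose
matrix coefficients are regular functions on `G` (polynomials in the entries and `det⁻¹`). -/
structure RationalRep {N : ℕ} (G : LinAlgGroup N) (d : ℕ) where
  ρ : Matrix (Fin N) (Fin N) ℂ → Matrix (Fin d) (Fin d) ℂ
  map_one : ρ 1 = 1
  map_mul : ∀ A ∈ G.carrier, ∀ B ∈ G.carrier, ρ (A * B) = ρ A * ρ B
  unit : ∀ A ∈ G.carrier, IsUnit (ρ A)
  rational : ∀ i j : Fin d, ∃ (k : ℕ) (p : MvPolynomial (Fin N × Fin N) ℂ),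
    ∀ A ∈ G.carrier, ρ A i j * A.det ^ k =
      MvPolynomial.eval (fun ij => A ij.1 ij.2) p

/-- Zariski density of a subset of a complex vector space `ι → ℂ`. -/
def ZDense {ι : Type*} (s : Set (ι → ℂ)) : Prop :=
  ∀ p : MvPolynomial ι ℂ, (∀ x ∈ s, MvPolynomial.eval x p = 0) → p = 0

/-!
By the Lie–Kolchin theorem a Borel subgroup `B` has eigencovectors `f₁` on `U₁` and `f₂` on `U₂`.
Contracting a tensor with `f₂`, respectively `f₁`, gives linear maps `U₁ ⊗ U₂ → U₁` and
`U₁ ⊗ U₂ → U₂` which are `B`-equivariant up to scalars, and the scalars are absorbed by the torus.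
So all rescaled contractions map the dense orbit of `(w, u₃)` into the orbit of
`(f₂ · w, f₁ · w, u₃)`. Since `u₁ ⊗ u₂` contracts to `f₂(u₂) u₁` and `f₁(u₁) u₂`, together they
reach every `(u₁, u₂, u₃)` with `f₁(u₁) f₂(u₂) ≠ 0`, and these points are dense.

In the proof of Lie–Kolchin, connectedness is only used in the form that a regular function with
finitely many values is constant. That form passes to sets of commutators because each set
`{[a, b] | b}` contains `1`, which avoids derived subgroups and their closures.
-/

section IteratedCommutators

theorem mapsTo_commSet {M M' : Type*} [Monoid M] [Inv M] [Monoid M'] [Inv M'] (f : M →* M')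
    (hf : ∀ a, f a⁻¹ = (f a)⁻¹) {s : Set M} {t : Set M'} (hst : Set.MapsTo f s t) (k : ℕ) :
    Set.MapsTo f (commSet k s) (commSet k t) := by
  induction k with
  | zero => exact hst
  | succ k ih =>
    rintro _ ⟨a, ha, b, hb, rfl⟩
    exact ⟨f a, ih ha, f b, ih hb, by simp only [map_mul, hf]⟩

variable {G : Type*} [Group G] {s : Set G}

theorem one_mem_commSet (hs : 1 ∈ s) (k : ℕ) : 1 ∈ commSet k s := by
  induction k with
  | zero => exact hs
  | succ k ih => exact ⟨1, ih, 1, ih, by group⟩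

theorem conj_mem_commSet (hs : ∀ g : G, ∀ a ∈ s, g⁻¹ * a * g ∈ s) (k : ℕ) (g : G) :
    ∀ a ∈ commSet k s, g⁻¹ * a * g ∈ commSet k s := by
  induction k with
  | zero => exact hs g
  | succ k ih =>
    rintro _ ⟨a, ha, b, hb, rfl⟩
    exact ⟨_, ih a ha, _, ih b hb, by group⟩

end IteratedCommutators

section ConnectedFor

/-- `S` is connected for the family `R` of functions if a function of `R` taking finitely many
values on `S` is constant on `S`. When `R` is the coordinate ring of an affine variety and `S` is a
closed subvariety, this is connectedness in the Zariski topology; unlike irreducibility, it passes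
from a set to its set of commutators without any closure operation. -/
def IsConnectedFor {X Y : Type*} (R : Set (X → Y)) (S : Set X) : Prop :=
  ∀ f ∈ R, (f '' S).Finite → (f '' S).Subsingleton

theorem isConnectedFor_univ_of_isDomain {X K : Type*} [Field K] (R : Subalgebra K (X → K))
    [IsDomain R] : IsConnectedFor (R : Set (X → K)) Set.univ := by
  intro f hf hfin
  have hprod : ∏ c ∈ hfin.toFinset, ((⟨f, hf⟩ : R) - algebraMap K R c) = 0 := by
    ext x
    suffices ∏ c ∈ hfin.toFinset, (f x - c) = 0 by simpa [Finset.prod_apply]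
    exact Finset.prod_eq_zero (i := f x) (by simp) (sub_self _)
  obtain ⟨c, -, hc⟩ := Finset.prod_eq_zero_iff.1 hprod
  have hfc : ∀ x, f x = c := fun x ↦ sub_eq_zero.1 (congrFun (congrArg Subtype.val hc) x)
  rintro _ ⟨x, -, rfl⟩ _ ⟨y, -, rfl⟩
  rw [hfc x, hfc y]

-- For fixed `a`, the values of `f` on the commutators of `a` form one constant, namely `f 1`.
theorem isConnectedFor_commSet {G Y : Type*} [Group G] {R : Set (G → Y)}
    (hR : ∀ f ∈ R, ∀ a, (fun b ↦ f (a * b * a⁻¹ * b⁻¹)) ∈ R) {S : Set G} (h1 : 1 ∈ S)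
    (hS : IsConnectedFor R S) (k : ℕ) : IsConnectedFor R (commSet k S) := by
  induction k with
  | zero => exact hS
  | succ k ih =>
    intro f hf hfin
    suffices hf1 : ∀ m ∈ commSet (k + 1) S, f m = f 1 by
      rintro _ ⟨x, hx, rfl⟩ _ ⟨y, hy, rfl⟩
      rw [hf1 x hx, hf1 y hy]
    rintro _ ⟨a, ha, b, hb, rfl⟩
    have hfin_a : ((fun b ↦ f (a * b * a⁻¹ * b⁻¹)) '' commSet k S).Finite :=
      hfin.subset <| by
        rintro _ ⟨b, hb, rfl⟩
        exact ⟨_, ⟨a, ha, b, hb, rfl⟩, rfl⟩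
    simpa using ih _ (hR f hf a) hfin_a ⟨b, hb, rfl⟩ ⟨1, one_mem_commSet h1 k, rfl⟩

theorem IsConnectedFor.image_subsingleton_of_smul {X K V : Type*} [Field K] [AddCommGroup V]
    [Module K V] {R : Set (X → K)} {S : Set X} (hS : IsConnectedFor R S) {F : X → V}
    (hF : ∀ ξ : Module.Dual K V, (fun x ↦ ξ (F x)) ∈ R) {v : V} (hv : v ≠ 0) {l : X → K}
    (hl : ∀ x ∈ S, F x = l x • v) (hfin : (l '' S).Finite) : (l '' S).Subsingleton := by
  obtain ⟨ξ, hξ⟩ := Module.Projective.exists_dual_ne_zero K hv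
  have hξF : ∀ x ∈ S, ξ (F x) = l x * ξ v := fun x hx ↦ by rw [hl x hx, map_smul, smul_eq_mul]
  have himage : (fun x ↦ ξ (F x)) '' S = (· * ξ v) '' (l '' S) := by
    rw [Set.image_image]
    exact Set.image_congr hξF
  have hsub := hS _ (hF ξ) (himage ▸ hfin.image _)
  rw [himage] at hsub
  exact Set.subsingleton_of_image (mul_left_injective₀ hξ) _ hsub

end ConnectedFor

section CommonEigenvectors

variable {K V : Type*} [Field K] [IsAlgClosed K] [AddCommGroup V] [Module K V]
  [FiniteDimensional K V] {W : Submodule K V}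

theorem exists_mem_apply_eq_smul (hW : W ≠ ⊥) (f : Module.End K V) (hf : ∀ v ∈ W, f v ∈ W) :
    ∃ v ∈ W, v ≠ 0 ∧ ∃ μ : K, f v = μ • v := by
  have : Nontrivial W := Submodule.nontrivial_iff_ne_bot.2 hW
  obtain ⟨μ, hμ⟩ := Module.End.exists_eigenvalue (f.restrict hf)
  obtain ⟨v, hv⟩ := hμ.exists_hasEigenvector
  exact ⟨v, v.2, by simpa using hv.2, μ, congrArg Subtype.val hv.apply_eq_smul⟩

-- On a minimal invariant subspace every operator of `T` is a scalar.
theorem exists_common_eigenvector_of_commute (hW : W ≠ ⊥) (T : Set (Module.End K V))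
    (hT : ∀ a ∈ T, ∀ v ∈ W, a v ∈ W)
    (hcomm : ∀ a ∈ T, ∀ b ∈ T, ∀ v ∈ W, a (b v) = b (a v)) :
    ∃ v ≠ 0, ∀ a ∈ T, ∃ c : K, a v = c • v := by
  obtain ⟨U, ⟨hU, hUW, hUT⟩, hmin⟩ := wellFounded_lt.has_min
    {U : Submodule K V | U ≠ ⊥ ∧ U ≤ W ∧ ∀ a ∈ T, ∀ v ∈ U, a v ∈ U} ⟨W, hW, le_rfl, hT⟩
  obtain ⟨v, hvU, hv⟩ := U.exists_mem_ne_zero_of_ne_bot hU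
  refine ⟨v, hv, fun a ha ↦ ?_⟩
  obtain ⟨y, hyU, hy, μ, hμ⟩ := exists_mem_apply_eq_smul hU a (hUT a ha)
  have hinf : U ⊓ Module.End.eigenspace a μ = U := by
    refine eq_of_le_of_not_lt inf_le_left (hmin _ ⟨?_, inf_le_left.trans hUW, ?_⟩)
    · exact (Submodule.ne_bot_iff _).2 ⟨y, ⟨hyU, Module.End.mem_eigenspace_iff.2 hμ⟩, hy⟩
    · rintro b hb x ⟨hxU, hx⟩
      refine ⟨hUT b hb x hxU, Module.End.mem_eigenspace_iff.2 ?_⟩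
      rw [hcomm a ha b hb x (hUW hxU), Module.End.mem_eigenspace_iff.1 hx, map_smul]
  exact ⟨μ, Module.End.mem_eigenspace_iff.1 (inf_eq_left.1 hinf hvU)⟩

end CommonEigenvectors

section LieKolchin

variable {K G V : Type*} [Field K] [Group G] [AddCommGroup V] [Module K V]
  (ρ : Representation K G V)

/-- The simultaneous eigenspace of the operators `ρ s`, `s ∈ S`, with eigenvalues `χ s`. -/
def jointEigenspace (S : Set G) (χ : G → K) : Submodule K V :=
  ⨅ s ∈ S, Module.End.eigenspace (ρ s) (χ s)

variable {ρ}

theorem mem_jointEigenspace {S : Set G} {χ : G → K} {v : V} :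
    v ∈ jointEigenspace ρ S χ ↔ ∀ s ∈ S, ρ s v = χ s • v := by
  simp [jointEigenspace, Submodule.mem_iInf]

theorem rep_apply_apply_conj (g s : G) (v : V) : ρ g (ρ (g⁻¹ * s * g) v) = ρ s (ρ g v) := by
  simp only [← Module.End.mul_apply, ← map_mul]
  group

theorem rep_commutator_apply (a b : G) (v : V) :
    ρ (a * b * a⁻¹ * b⁻¹) (ρ b (ρ a v)) = ρ a (ρ b v) := by
  simp only [← Module.End.mul_apply, ← map_mul]
  group

theorem rep_apply_ne_zero (g : G) {v : V} (hv : v ≠ 0) : ρ g v ≠ 0 :=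
  (map_ne_zero_iff (ρ g) (ρ.apply_bijective g).injective).2 hv

theorem hasEigenvalue_of_apply_eq_smul {f : Module.End K V} {μ : K} {v : V} (hv : v ≠ 0)
    (h : f v = μ • v) : f.HasEigenvalue μ :=
  Module.End.hasEigenvalue_of_hasEigenvector ⟨Module.End.mem_eigenspace_iff.2 h, hv⟩

theorem mapsTo_jointEigenspace {C : Set G} {χ : G → K} {g : G}
    (hC : ∀ s ∈ C, g⁻¹ * s * g ∈ C) (hχ : ∀ s ∈ C, χ (g⁻¹ * s * g) = χ s) :
    ∀ v ∈ jointEigenspace ρ C χ, ρ g v ∈ jointEigenspace ρ C χ := by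
  intro v hv
  refine mem_jointEigenspace.2 fun s hs ↦ ?_
  rw [← rep_apply_apply_conj, mem_jointEigenspace.1 hv _ (hC s hs), map_smul, hχ s hs]

variable [FiniteDimensional K V] {R : Set (G → K)} {S C : Set G} {χ : G → K}

theorem weight_conj_eq (hρ : ∀ (v : V) (ξ : Module.Dual K V), (fun g ↦ ξ (ρ g v)) ∈ R)
    (hconj : ∀ f ∈ R, ∀ s, (fun g ↦ f (g⁻¹ * s * g)) ∈ R)
    (h1 : 1 ∈ S) (hS : IsConnectedFor R S) (hW : jointEigenspace ρ C χ ≠ ⊥)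
    {s : G} (hs : ∀ g ∈ S, g⁻¹ * s * g ∈ C) {g : G} (hg : g ∈ S) : χ (g⁻¹ * s * g) = χ s := by
  obtain ⟨v, hvW, hv⟩ := Submodule.exists_mem_ne_zero_of_ne_bot hW
  have hχ : ∀ g ∈ S, ρ (g⁻¹ * s * g) v = χ (g⁻¹ * s * g) • v :=
    fun g hg ↦ mem_jointEigenspace.1 hvW _ (hs g hg)
  have heig : ∀ g ∈ S, Module.End.HasEigenvalue (ρ s) (χ (g⁻¹ * s * g)) := fun g hg ↦
    hasEigenvalue_of_apply_eq_smul (rep_apply_ne_zero (ρ := ρ) g hv)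
      (by rw [← rep_apply_apply_conj, hχ g hg, map_smul])
  have hfin := (Module.End.finite_hasEigenvalue (ρ s)).subset (Set.image_subset_iff.2 heig)
  simpa using hS.image_subsingleton_of_smul (fun ξ ↦ hconj _ (hρ v ξ) s) hv hχ hfin
    (Set.mem_image_of_mem _ hg) (Set.mem_image_of_mem _ h1)

theorem weight_commutator_eq_one [IsAlgClosed K]
    (hρ : ∀ (v : V) (ξ : Module.Dual K V), (fun g ↦ ξ (ρ g v)) ∈ R)
    (hcomm : ∀ f ∈ R, ∀ a, (fun b ↦ f (a * b * a⁻¹ * b⁻¹)) ∈ R)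
    (h1 : 1 ∈ S) (hS : IsConnectedFor R S) (hW : jointEigenspace ρ C χ ≠ ⊥)
    (hinv : ∀ g ∈ S, ∀ v ∈ jointEigenspace ρ C χ, ρ g v ∈ jointEigenspace ρ C χ)
    (hC : ∀ a ∈ S, ∀ b ∈ S, a * b * a⁻¹ * b⁻¹ ∈ C) {a b : G} (ha : a ∈ S) (hb : b ∈ S) :
    χ (a * b * a⁻¹ * b⁻¹) = 1 := by
  obtain ⟨y, hyW, hy, μ, hμ⟩ := exists_mem_apply_eq_smul hW (ρ a) (hinv a ha)
  have hμ0 : μ ≠ 0 := by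
    rintro rfl
    exact rep_apply_ne_zero a hy (by rw [hμ, zero_smul])
  have hχ : ∀ b ∈ S, ∀ v ∈ jointEigenspace ρ C χ,
      ρ (a * b * a⁻¹ * b⁻¹) v = χ (a * b * a⁻¹ * b⁻¹) • v :=
    fun b hb v hv ↦ mem_jointEigenspace.1 hv _ (hC a ha b hb)
  have heig : ∀ b ∈ S, Module.End.HasEigenvalue (ρ a) (χ (a * b * a⁻¹ * b⁻¹) * μ) := fun b hb ↦
    hasEigenvalue_of_apply_eq_smul (rep_apply_ne_zero (ρ := ρ) b hy) <| by
      rw [← rep_commutator_apply, hμ, map_smul, map_smul, hχ b hb _ (hinv b hb y hyW), smul_smul,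
        mul_comm]
  have hfin : ((fun b ↦ χ (a * b * a⁻¹ * b⁻¹)) '' S).Finite := by
    refine Set.Finite.of_finite_image ?_ (mul_left_injective₀ hμ0).injOn
    rw [Set.image_image]
    exact (Module.End.finite_hasEigenvalue (ρ a)).subset (Set.image_subset_iff.2 heig)
  have hconst : χ (a * b * a⁻¹ * b⁻¹) = χ 1 := by
    simpa using hS.image_subsingleton_of_smul (fun ξ ↦ hcomm _ (hρ y ξ) a) hy
      (fun b hb ↦ hχ b hb y hyW) hfin (Set.mem_image_of_mem _ hb) (Set.mem_image_of_mem _ h1)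
  have hχ1 : y = χ 1 • y := by simpa using hχ 1 h1 y hyW
  rw [hconst]
  exact smul_left_injective K hy (by simpa using hχ1.symm)

theorem exists_common_eigenvector_of_commutators [IsAlgClosed K]
    (hρ : ∀ (v : V) (ξ : Module.Dual K V), (fun g ↦ ξ (ρ g v)) ∈ R)
    (hconj : ∀ f ∈ R, ∀ s, (fun g ↦ f (g⁻¹ * s * g)) ∈ R)
    (hcomm : ∀ f ∈ R, ∀ a, (fun b ↦ f (a * b * a⁻¹ * b⁻¹)) ∈ R)
    (h1 : 1 ∈ S) (hS : IsConnectedFor R S) (hC : ∀ a ∈ S, ∀ b ∈ S, a * b * a⁻¹ * b⁻¹ ∈ C)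
    (hCconj : ∀ g ∈ S, ∀ s ∈ C, g⁻¹ * s * g ∈ C)
    (hv : ∃ v ≠ 0, ∀ s ∈ C, ∃ c : K, ρ s v = c • v) :
    ∃ v ≠ 0, ∀ s ∈ S, ∃ c : K, ρ s v = c • v := by
  obtain ⟨v, hv, hχ⟩ := hv
  choose! χ hχ using hχ
  have hW : jointEigenspace ρ C χ ≠ ⊥ :=
    (Submodule.ne_bot_iff _).2 ⟨v, mem_jointEigenspace.2 hχ, hv⟩
  have hinv : ∀ g ∈ S, ∀ v ∈ jointEigenspace ρ C χ, ρ g v ∈ jointEigenspace ρ C χ :=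
    fun g hg ↦ mapsTo_jointEigenspace (hCconj g hg) fun s hs ↦
      weight_conj_eq hρ hconj h1 hS hW (fun g hg ↦ hCconj g hg s hs) hg
  have hcommute : ∀ a ∈ S, ∀ b ∈ S, ∀ x ∈ jointEigenspace ρ C χ,
      ρ a (ρ b x) = ρ b (ρ a x) := fun a ha b hb x hx ↦ by
    rw [← rep_commutator_apply,
      mem_jointEigenspace.1 (hinv b hb _ (hinv a ha x hx)) _ (hC a ha b hb),
      weight_commutator_eq_one hρ hcomm h1 hS hW hinv hC ha hb, one_smul]
  simpa using exists_common_eigenvector_of_commute hW (ρ '' S) (by simpa using hinv)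
    (by simpa using hcommute)

theorem exists_common_eigenvector_of_solvable [IsAlgClosed K] [Nontrivial V]
    (hρ : ∀ (v : V) (ξ : Module.Dual K V), (fun g ↦ ξ (ρ g v)) ∈ R)
    (hconj : ∀ f ∈ R, ∀ s, (fun g ↦ f (g⁻¹ * s * g)) ∈ R)
    (hcomm : ∀ f ∈ R, ∀ a, (fun b ↦ f (a * b * a⁻¹ * b⁻¹)) ∈ R)
    (hG : IsConnectedFor R Set.univ) (hsolv : IsSolvSet (Set.univ : Set G)) :
    ∃ v : V, v ≠ 0 ∧ ∀ g, ∃ c : K, ρ g v = c • v := by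
  obtain ⟨n, hn⟩ := hsolv
  have hdescent : ∀ k, (∃ v : V, v ≠ 0 ∧ ∀ g ∈ commSet k Set.univ, ∃ c : K, ρ g v = c • v) →
      ∃ v : V, v ≠ 0 ∧ ∀ g, ∃ c : K, ρ g v = c • v := by
    intro k
    induction k with
    | zero => simp [commSet]
    | succ k ih =>
      exact fun hv ↦ ih <| exists_common_eigenvector_of_commutators
        (C := commSet (k + 1) Set.univ) hρ hconj hcomm
        (one_mem_commSet (Set.mem_univ 1) k) (isConnectedFor_commSet hcomm (Set.mem_univ 1) hG k)
        (fun a ha b hb ↦ ⟨a, ha, b, hb, rfl⟩)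
        (fun g _ ↦ conj_mem_commSet (fun _ _ _ ↦ Set.mem_univ _) (k + 1) g) hv
  obtain ⟨v, hv⟩ := exists_ne (0 : V)
  refine hdescent n ⟨v, hv, fun g hg ↦ ⟨1, ?_⟩⟩
  rw [Set.mem_singleton_iff.1 (hn hg), map_one, one_smul, Module.End.one_apply]

end LieKolchin

section RegularFunctions

open Matrix

variable {n K : Type*} [Fintype n] [DecidableEq n] [Field K] (H : Subgroup (GL n K))

/-- The algebra of regular functions on a group `H` of invertible matrices: polynomials in the
matrix entries and the inverse of the determinant, as functions on `H`. -/
def regularFunctions : Subalgebra K (H → K) :=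
  Algebra.adjoin K (insert (fun g ↦ g.1.1.det⁻¹) (Set.range fun (ij : n × n) g ↦ g.1.1 ij.1 ij.2))

/-- A self-map of `H` is regular if it pulls regular functions back to regular functions. -/
def IsRegularMap (φ : H → H) : Prop :=
  ∀ f ∈ regularFunctions H, (fun g ↦ f (φ g)) ∈ regularFunctions H

variable {H}

theorem det_inv_mem_regularFunctions : (fun g : H ↦ g.1.1.det⁻¹) ∈ regularFunctions H :=
  Algebra.subset_adjoin (Set.mem_insert _ _)

theorem eval_mem_regularFunctions (p : MvPolynomial (n × n) K) :
    (fun g : H ↦ MvPolynomial.eval (fun ij ↦ g.1.1 ij.1 ij.2) p) ∈ regularFunctions H := by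
  induction p using MvPolynomial.induction_on with
  | C a =>
    simp only [MvPolynomial.eval_C]
    exact (regularFunctions H).algebraMap_mem a
  | add p q hp hq =>
    simp only [map_add]
    exact add_mem hp hq
  | mul_X p ij hp =>
    simp only [map_mul, MvPolynomial.eval_X]
    exact mul_mem hp (Algebra.subset_adjoin (Set.mem_insert_of_mem _ ⟨ij, rfl⟩))

theorem entry_mem_regularFunctions (i j : n) : (fun g : H ↦ g.1.1 i j) ∈ regularFunctions H := by
  simpa using eval_mem_regularFunctions (H := H) (MvPolynomial.X (i, j))

theorem eval_entries_det (A : Matrix n n K) :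
    MvPolynomial.eval (fun ij ↦ A ij.1 ij.2) (mvPolynomialX n n K).det = A.det :=
  eval_det_mvPolynomialX _ _ _

theorem eval_entries_adjugate (A : Matrix n n K) (i j : n) :
    MvPolynomial.eval (fun ij ↦ A ij.1 ij.2) ((mvPolynomialX n n K).adjugate i j) =
      A.adjugate i j := by
  have h := (MvPolynomial.eval fun ij : n × n ↦ A ij.1 ij.2).map_adjugate (mvPolynomialX n n K)
  rw [mvPolynomialX_mapMatrix_eval] at h
  exact congrFun₂ h i j

theorem det_mem_regularFunctions : (fun g : H ↦ g.1.1.det) ∈ regularFunctions H := by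
  simpa only [eval_entries_det] using
    eval_mem_regularFunctions (H := H) (mvPolynomialX n n K).det

theorem inv_entry_mem_regularFunctions (i j : n) :
    (fun g : H ↦ (g⁻¹).1.1 i j) ∈ regularFunctions H := by
  have hadj : (fun g : H ↦ g.1.1.adjugate i j) ∈ regularFunctions H := by
    simpa only [eval_entries_adjugate] using
      eval_mem_regularFunctions (H := H) ((mvPolynomialX n n K).adjugate i j)
  convert mul_mem det_inv_mem_regularFunctions hadj using 2 with g
  simp [Matrix.inv_def]

theorem isRegularMap_of_generators {φ : H → H}
    (hdet : (fun g ↦ (φ g).1.1.det⁻¹) ∈ regularFunctions H)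
    (hentry : ∀ i j, (fun g ↦ (φ g).1.1 i j) ∈ regularFunctions H) : IsRegularMap H φ := by
  intro f hf
  induction hf using Algebra.adjoin_induction with
  | mem f hf =>
    obtain rfl | ⟨ij, rfl⟩ := hf
    · exact hdet
    · exact hentry ij.1 ij.2
  | algebraMap c => exact (regularFunctions H).algebraMap_mem c
  | add f g _ _ hf hg => exact add_mem hf hg
  | mul f g _ _ hf hg => exact mul_mem hf hg

theorem isRegularMap_id : IsRegularMap H fun g ↦ g := fun _ hf ↦ hf

theorem isRegularMap_const (c : H) : IsRegularMap H fun _ ↦ c :=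
  fun f _ ↦ (regularFunctions H).algebraMap_mem (f c)

theorem isRegularMap_inv : IsRegularMap H fun g ↦ g⁻¹ := by
  refine isRegularMap_of_generators ?_ inv_entry_mem_regularFunctions
  simpa using det_mem_regularFunctions

theorem IsRegularMap.mul {φ ψ : H → H} (hφ : IsRegularMap H φ) (hψ : IsRegularMap H ψ) :
    IsRegularMap H fun g ↦ φ g * ψ g := by
  refine isRegularMap_of_generators ?_ fun i j ↦ ?_
  · convert mul_mem (hφ _ det_inv_mem_regularFunctions) (hψ _ det_inv_mem_regularFunctions)
      using 2 with g
    simp [mul_comm]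
  · convert sum_mem fun k (_ : k ∈ Finset.univ) ↦ mul_mem (hφ _ (entry_mem_regularFunctions i k))
      (hψ _ (entry_mem_regularFunctions k j)) using 2 with g
    simp [Matrix.mul_apply]

theorem isRegularMap_conj (s : H) : IsRegularMap H fun g ↦ g⁻¹ * s * g :=
  (isRegularMap_inv.mul (isRegularMap_const s)).mul isRegularMap_id

theorem isRegularMap_commutator (a : H) : IsRegularMap H fun b ↦ a * b * a⁻¹ * b⁻¹ :=
  (((isRegularMap_const a).mul isRegularMap_id).mul (isRegularMap_const a⁻¹)).mul isRegularMap_inv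

theorem exists_mul_det_pow_eq_eval {f : H → K} (hf : f ∈ regularFunctions H) :
    ∃ (k : ℕ) (p : MvPolynomial (n × n) K),
      ∀ g : H, f g * g.1.1.det ^ k = MvPolynomial.eval (fun ij ↦ g.1.1 ij.1 ij.2) p := by
  induction hf using Algebra.adjoin_induction with
  | mem f hf =>
    obtain rfl | ⟨ij, rfl⟩ := hf
    · exact ⟨1, 1, fun g ↦ by simp [g.1.det_ne_zero]⟩
    · exact ⟨0, MvPolynomial.X ij, fun g ↦ by simp⟩
  | algebraMap c => exact ⟨0, MvPolynomial.C c, fun g ↦ by simp⟩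
  | add f₁ f₂ _ _ h₁ h₂ =>
    obtain ⟨k, p, hp⟩ := h₁
    obtain ⟨l, q, hq⟩ := h₂
    refine ⟨k + l, p * (mvPolynomialX n n K).det ^ l + q * (mvPolynomialX n n K).det ^ k,
      fun g ↦ ?_⟩
    simp only [map_add, map_mul, map_pow, ← hp, ← hq, eval_entries_det, Pi.add_apply]
    ring
  | mul f₁ f₂ _ _ h₁ h₂ =>
    obtain ⟨k, p, hp⟩ := h₁
    obtain ⟨l, q, hq⟩ := h₂
    refine ⟨k + l, p * q, fun g ↦ ?_⟩
    simp only [map_mul, ← hp, ← hq, Pi.mul_apply]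
    ring

end RegularFunctions

section MatrixGroups

open Matrix

variable {N d : ℕ} {B L : LinAlgGroup N}

/-- A linear algebraic group as a subgroup of the general linear group. -/
def LinAlgGroup.toSubgroup (B : LinAlgGroup N) : Subgroup (GL (Fin N) ℂ) where
  carrier := {u | u.1 ∈ B.carrier}
  one_mem' := B.one_mem
  mul_mem' {a b} ha hb := B.mul_mem a ha b hb
  inv_mem' {a} ha := by simpa using B.inv_mem a ha

theorem LinAlgGroup.exists_toSubgroup_eq {A : Matrix (Fin N) (Fin N) ℂ} (hA : A ∈ B.carrier) :
    ∃ g : B.toSubgroup, g.1.1 = A := by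
  obtain ⟨u, rfl⟩ := B.unit A hA
  exact ⟨⟨u, hA⟩, rfl⟩

theorem isSolvSet_univ_toSubgroup (hB : IsSolvSet B.carrier) :
    IsSolvSet (Set.univ : Set B.toSubgroup) := by
  obtain ⟨k, hk⟩ := hB
  refine ⟨k, fun g hg ↦ Subtype.ext (Units.ext (hk ?_))⟩
  exact mapsTo_commSet ((Units.coeHom _).comp B.toSubgroup.subtype) (by simp)
    (fun g _ ↦ g.2) k hg

theorem isDomain_regularFunctions (hB : IsZConnected B) :
    IsDomain (regularFunctions B.toSubgroup) := by
  have : NoZeroDivisors (regularFunctions B.toSubgroup) := by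
    refine ⟨fun {f₁ f₂} hmul ↦ ?_⟩
    obtain ⟨k, p, hp⟩ := exists_mul_det_pow_eq_eval f₁.2
    obtain ⟨l, q, hq⟩ := exists_mul_det_pow_eq_eval f₂.2
    have hzero {m : ℕ} {f : regularFunctions B.toSubgroup} {r : MvPolynomial (Fin N × Fin N) ℂ}
        (hf : ∀ g, f.1 g * g.1.1.det ^ m = MvPolynomial.eval (fun ij ↦ g.1.1 ij.1 ij.2) r)
        (hr : ∀ A ∈ B.carrier, MvPolynomial.eval (fun ij ↦ A ij.1 ij.2) r = 0) : f = 0 := by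
      ext g
      exact (mul_eq_zero.1 ((hf g).trans (hr _ g.2))).resolve_right (pow_ne_zero _ g.1.det_ne_zero)
    refine (hB p q fun A hA ↦ ?_).imp (hzero hp) (hzero hq)
    obtain ⟨g, rfl⟩ := LinAlgGroup.exists_toSubgroup_eq hA
    rw [← hp, ← hq, mul_mul_mul_comm]
    exact mul_eq_zero_of_left (congrFun (congrArg Subtype.val hmul) g) _
  exact NoZeroDivisors.to_isDomain _

/-- The restriction of a rational representation to a smaller group. -/
def RationalRep.restrict (ρ : RationalRep L d) (h : B.carrier ⊆ L.carrier) : RationalRep B d where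
  ρ := ρ.ρ
  map_one := ρ.map_one
  map_mul A hA A' hA' := ρ.map_mul A (h hA) A' (h hA')
  unit A hA := ρ.unit A (h hA)
  rational i j := (ρ.rational i j).imp fun _ ↦ Exists.imp fun _ hp A hA ↦ hp A (h hA)

namespace RationalRep

variable (ρ : RationalRep B d)

theorem entry_mem_regularFunctions (i j : Fin d) :
    (fun g : B.toSubgroup ↦ ρ.ρ g.1.1 i j) ∈ regularFunctions B.toSubgroup := by
  obtain ⟨k, p, hp⟩ := ρ.rational i j
  convert mul_mem (eval_mem_regularFunctions p) (pow_mem det_inv_mem_regularFunctions k)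
    using 2 with g
  have hdet : g.1.1.det ≠ 0 := g.1.det_ne_zero
  simp [← hp _ g.2, hdet]

/-- The contragredient representation, acting on row vectors. -/
def contragredient : Representation ℂ B.toSubgroup (Fin d → ℂ) where
  toFun g := (ρ.ρ (g⁻¹).1.1).vecMulLinear
  map_one' := by
    refine LinearMap.ext fun v ↦ ?_
    simp [ρ.map_one]
  map_mul' g h := by
    refine LinearMap.ext fun v ↦ ?_
    have hmul : ρ.ρ ((g * h)⁻¹).1.1 = ρ.ρ (h⁻¹).1.1 * ρ.ρ (g⁻¹).1.1 := by
      rw [_root_.mul_inv_rev]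
      exact ρ.map_mul _ (h⁻¹).2 _ (g⁻¹).2
    simp only [hmul, Module.End.mul_apply, vecMulLinear_apply, vecMul_vecMul]

theorem contragredient_coeff_mem_regularFunctions (f : Fin d → ℂ)
    (ξ : Module.Dual ℂ (Fin d → ℂ)) :
    (fun g ↦ ξ (ρ.contragredient g f)) ∈ regularFunctions B.toSubgroup := by
  have hcoeff : (fun g : B.toSubgroup ↦ ξ (f ᵥ* ρ.ρ g.1.1)) ∈ regularFunctions B.toSubgroup := by
    convert sum_mem fun j (_ : j ∈ Finset.univ) ↦ mul_mem
      (sum_mem fun i (_ : i ∈ Finset.univ) ↦ (regularFunctions B.toSubgroup).smul_mem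
        (ρ.entry_mem_regularFunctions i j) (f i))
      ((regularFunctions B.toSubgroup).algebraMap_mem (ξ fun k ↦ if j = k then 1 else 0))
      using 2 with g
    rw [LinearMap.pi_apply_eq_sum_univ]
    simp [vecMul, dotProduct]
  exact isRegularMap_inv _ hcoeff

theorem exists_vecMul_eq_smul (hconn : IsZConnected B) (hsolv : IsSolvSet B.carrier) (hd : 0 < d) :
    ∃ f : Fin d → ℂ, f ≠ 0 ∧ ∀ A ∈ B.carrier, ∃ c : ℂˣ, f ᵥ* ρ.ρ A = c • f := by
  have := isDomain_regularFunctions hconn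
  have : NeZero d := ⟨hd.ne'⟩
  obtain ⟨f, hf, hfg⟩ := exists_common_eigenvector_of_solvable
    (R := (regularFunctions B.toSubgroup : Set (B.toSubgroup → ℂ))) (ρ := ρ.contragredient)
    ρ.contragredient_coeff_mem_regularFunctions
    (fun F hF s ↦ isRegularMap_conj s F hF) (fun F hF a ↦ isRegularMap_commutator a F hF)
    (isConnectedFor_univ_of_isDomain _) (isSolvSet_univ_toSubgroup hsolv)
  refine ⟨f, hf, fun A hA ↦ ?_⟩
  obtain ⟨g, rfl⟩ := LinAlgGroup.exists_toSubgroup_eq hA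
  obtain ⟨c, hc⟩ : ∃ c : ℂ, f ᵥ* ρ.ρ g.1.1 = c • f := by
    simpa [contragredient] using hfg g⁻¹
  have hc0 : c ≠ 0 := by
    rintro rfl
    exact hf (vecMul_injective_of_isUnit (ρ.unit _ hA) (by simpa using hc))
  exact ⟨Units.mk0 c hc0, hc⟩

end RationalRep

end MatrixGroups

section ZariskiDensity

open Matrix

variable {ι ι' : Type*} {s t : Set (ι → ℂ)}

theorem zDense_univ : ZDense (Set.univ : Set (ι → ℂ)) :=
  fun _ hp ↦ MvPolynomial.funext fun x ↦ by simpa using hp x (Set.mem_univ x)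

theorem ZDense.mono (hs : ZDense s) (hst : s ⊆ t) : ZDense t :=
  fun p hp ↦ hs p fun x hx ↦ hp x (hst hx)

theorem ZDense.inter_eval_ne_zero (hs : ZDense s) {q : MvPolynomial ι ℂ} (hq : q ≠ 0) :
    ZDense (s ∩ {x | MvPolynomial.eval x q ≠ 0}) := by
  refine fun p hp ↦ (mul_eq_zero.1 (hs (p * q) fun x hx ↦ ?_)).resolve_right hq
  rw [map_mul, mul_eq_zero, or_iff_not_imp_right]
  exact fun hqx ↦ hp x ⟨hx, hqx⟩

theorem ZDense.inter_dotProduct_ne_zero [Fintype ι] (hs : ZDense s) {f : ι → ℂ} (hf : f ≠ 0) :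
    ZDense (s ∩ {x | f ⬝ᵥ x ≠ 0}) := by
  have heval : ∀ x, MvPolynomial.eval x (∑ i, MvPolynomial.C (f i) * MvPolynomial.X i) = f ⬝ᵥ x :=
    fun x ↦ by simp [dotProduct]
  simp only [← heval]
  refine hs.inter_eval_ne_zero fun h0 ↦ hf (dotProduct_eq_zero f fun x ↦ ?_)
  rw [← heval, h0, map_zero]

theorem exists_mvPolynomial_eval_eq [Finite ι] (f : (ι → ℂ) →ₗ[ℂ] (ι' → ℂ)) :
    ∃ P : ι' → MvPolynomial ι ℂ, ∀ x, (fun i ↦ MvPolynomial.eval x (P i)) = f x := by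
  classical
  have := Fintype.ofFinite ι
  refine ⟨f.toMatrix'.toMvPolynomial, fun x ↦ funext fun i ↦ ?_⟩
  rw [Matrix.toMvPolynomial_eval_eq_apply, LinearMap.toMatrix'_mulVec]

theorem ZDense.of_mapsTo_of_iUnion_range [Finite ι] {κ : Type*} {u : Set (ι' → ℂ)} (hs : ZDense s)
    (f : κ → (ι → ℂ) →ₗ[ℂ] (ι' → ℂ)) (hf : ∀ k, Set.MapsTo (f k) s u)
    (hrange : ZDense (⋃ k, Set.range (f k))) : ZDense u := by
  intro p hp
  refine hrange p fun y hy ↦ ?_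
  obtain ⟨k, x, rfl⟩ := Set.mem_iUnion.1 hy
  obtain ⟨P, hP⟩ := exists_mvPolynomial_eval_eq (f k)
  have heval : ∀ x, MvPolynomial.eval x (MvPolynomial.bind₁ P p) = MvPolynomial.eval (f k x) p :=
    fun x ↦ by
      rw [← hP]
      exact MvPolynomial.eval₂Hom_bind₁ _ _ _ _
  have hbind : MvPolynomial.bind₁ P p = 0 := hs _ fun x hx ↦ by rw [heval, hp _ (hf k hx)]
  rw [← heval, hbind, map_zero]

end ZariskiDensity

section Contraction

open Matrix Kronecker

variable {K ι₁ ι₂ ι₃ : Type*} [Field K] [Fintype ι₁] [Fintype ι₂]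

/-- The linear map `(u₁ ⊗ u₂, u₃) ↦ (s • f₂(u₂) u₁, t • f₁(u₁) u₂, u₃)` contracting the tensor
factors with the covectors `f₁` and `f₂`. A tensor is read as the matrix with rows indexed by `ι₂`
and columns indexed by `ι₁`, inverting `Matrix.vec`. -/
def contraction (f₁ : ι₁ → K) (f₂ : ι₂ → K) (s t : K) :
    ((ι₁ × ι₂) ⊕ ι₃ → K) →ₗ[K] (ι₁ ⊕ ι₂ ⊕ ι₃ → K) where
  toFun x := Sum.elim (s • f₂ ᵥ* of fun j i ↦ x (.inl (i, j)))
    (Sum.elim (t • (of fun j i ↦ x (.inl (i, j))) *ᵥ f₁) (x ∘ Sum.inr))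
  map_add' x y := by
    ext (i | j | k)
    · simp [vecMul, dotProduct, mul_add, Finset.sum_add_distrib]
    · simp [mulVec, dotProduct, add_mul, mul_add, Finset.sum_add_distrib]
    · simp
  map_smul' c x := by
    ext (i | j | k)
    · simp [vecMul, dotProduct, Finset.mul_sum, mul_left_comm]
    · simp [mulVec, dotProduct, Finset.mul_sum, mul_left_comm, mul_assoc]
    · simp

variable {f₁ : ι₁ → K} {f₂ : ι₂ → K} (s t : K)

theorem contraction_elim_vec (X : Matrix ι₂ ι₁ K) (y : ι₃ → K) :
    contraction f₁ f₂ s t (Sum.elim (vec X) y) =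
      Sum.elim (s • f₂ ᵥ* X) (Sum.elim (t • X *ᵥ f₁) y) := rfl

theorem contraction_elim_smul_kronecker_mulVec {A₁ : Matrix ι₁ ι₁ K} {A₂ : Matrix ι₂ ι₂ K}
    {c₁ c₂ : K} (h₁ : f₁ ᵥ* A₁ = c₁ • f₁) (h₂ : f₂ ᵥ* A₂ = c₂ • f₂) (r : K)
    (X : Matrix ι₂ ι₁ K) (y : ι₃ → K) :
    contraction f₁ f₂ s t (Sum.elim (r • (A₁ ⊗ₖ A₂) *ᵥ vec X) y) =
      Sum.elim ((s * r * c₂) • A₁ *ᵥ (f₂ ᵥ* X))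
        (Sum.elim ((t * r * c₁) • A₂ *ᵥ (X *ᵥ f₁)) y) := by
  have hrow : f₂ ᵥ* (A₂ * X * A₁ᵀ) = c₂ • A₁ *ᵥ (f₂ ᵥ* X) := by
    rw [← vecMul_vecMul, ← vecMul_vecMul, h₂, smul_vecMul, smul_vecMul, vecMul_transpose]
  have hcol : (A₂ * X * A₁ᵀ) *ᵥ f₁ = c₁ • A₂ *ᵥ (X *ᵥ f₁) := by
    rw [← mulVec_mulVec, ← mulVec_mulVec, mulVec_transpose, h₁, mulVec_smul, mulVec_smul]
  rw [kronecker_mulVec_vec, ← vec_smul, contraction_elim_vec, vecMul_smul, smul_mulVec, hrow, hcol]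
  simp only [smul_smul, mul_assoc]

theorem contraction_elim_vec_vecMulVec {x₁ : ι₁ → K} {x₂ : ι₂ → K} (h₁ : f₁ ⬝ᵥ x₁ ≠ 0)
    (h₂ : f₂ ⬝ᵥ x₂ ≠ 0) (x₃ : ι₃ → K) :
    contraction f₁ f₂ (f₂ ⬝ᵥ x₂)⁻¹ (f₁ ⬝ᵥ x₁)⁻¹ (Sum.elim (vec (vecMulVec x₂ x₁)) x₃) =
      Sum.elim x₁ (Sum.elim x₂ x₃) := by
  rw [contraction_elim_vec, vecMul_vecMulVec, vecMulVec_mulVec, dotProduct_comm x₁, op_smul_eq_smul,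
    inv_smul_smul₀ h₁, inv_smul_smul₀ h₂]

theorem zDense_iUnion_range_contraction [Finite ι₃] {f₁ : ι₁ → ℂ} {f₂ : ι₂ → ℂ} (h₁ : f₁ ≠ 0)
    (h₂ : f₂ ≠ 0) :
    ZDense (⋃ a : ℂˣ × ℂˣ, Set.range (contraction (ι₃ := ι₃) f₁ f₂ (a.1 : ℂ) (a.2 : ℂ))) := by
  have := Fintype.ofFinite ι₃
  have hf₁ : (Sum.elim f₁ 0 : ι₁ ⊕ ι₂ ⊕ ι₃ → ℂ) ≠ 0 := mt (congrArg (· ∘ Sum.inl)) h₁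
  have hf₂ : (Sum.elim 0 (Sum.elim f₂ 0) : ι₁ ⊕ ι₂ ⊕ ι₃ → ℂ) ≠ 0 :=
    mt (congrArg (· ∘ Sum.inr ∘ Sum.inl)) h₂
  refine ((zDense_univ.inter_dotProduct_ne_zero hf₁).inter_dotProduct_ne_zero hf₂).mono ?_
  rintro x ⟨⟨-, hx₁⟩, hx₂⟩
  obtain ⟨x₁, x₂, x₃, rfl⟩ : ∃ x₁ x₂ x₃, x = Sum.elim x₁ (Sum.elim x₂ x₃) :=
    ⟨x ∘ .inl, x ∘ .inr ∘ .inl, x ∘ .inr ∘ .inr, by ext (i | j | k) <;> rfl⟩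
  simp only [Set.mem_ofPred_eq, sumElim_dotProduct_sumElim, zero_dotProduct, add_zero,
    zero_add] at hx₁ hx₂
  exact Set.mem_iUnion.2 ⟨(Units.mk0 _ (inv_ne_zero hx₂), Units.mk0 _ (inv_ne_zero hx₁)), _,
    contraction_elim_vec_vecMulVec hx₁ hx₂ x₃⟩

end Contraction

theorem stmt19_general {N d₁ d₂ d₃ : ℕ} (hd₁ : 0 < d₁) (hd₂ : 0 < d₂) {B : LinAlgGroup N}
    (hconn : IsZConnected B) (hsolv : IsSolvSet B.carrier)
    (ρ₁ : RationalRep B d₁) (ρ₂ : RationalRep B d₂) (ρ₃ : RationalRep B d₃)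
    {w : Fin d₁ × Fin d₂ → ℂ} {u₃ : Fin d₃ → ℂ}
    (hw : ZDense {x : (Fin d₁ × Fin d₂) ⊕ Fin d₃ → ℂ |
      ∃ A ∈ B.carrier, ∃ s t : ℂˣ,
        x = Sum.elim
          (fun pq => (s : ℂ) *
            (Matrix.of fun p q : Fin d₁ × Fin d₂ =>
              ρ₁.ρ A p.1 q.1 * ρ₂.ρ A p.2 q.2).mulVec w pq)
          (fun i => (t : ℂ) * (ρ₃.ρ A).mulVec u₃ i)}) :
    ∃ (u₁ : Fin d₁ → ℂ) (u₂ : Fin d₂ → ℂ),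
      ZDense {x : Fin d₁ ⊕ Fin d₂ ⊕ Fin d₃ → ℂ |
        ∃ A ∈ B.carrier, ∃ s t r : ℂˣ,
          x = Sum.elim (fun i => (s : ℂ) * (ρ₁.ρ A).mulVec u₁ i)
                (Sum.elim (fun j => (t : ℂ) * (ρ₂.ρ A).mulVec u₂ j)
                  (fun k => (r : ℂ) * (ρ₃.ρ A).mulVec u₃ k))} := by
  obtain ⟨f₁, hf₁, hχ₁⟩ := ρ₁.exists_vecMul_eq_smul hconn hsolv hd₁
  obtain ⟨f₂, hf₂, hχ₂⟩ := ρ₂.exists_vecMul_eq_smul hconn hsolv hd₂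
  let X : Matrix (Fin d₂) (Fin d₁) ℂ := Matrix.of fun j i ↦ w (i, j)
  refine ⟨Matrix.vecMul f₂ X, X.mulVec f₁, hw.of_mapsTo_of_iUnion_range _ ?_
    (zDense_iUnion_range_contraction hf₁ hf₂)⟩
  rintro ⟨a, b⟩ _ ⟨A, hA, s, t, rfl⟩
  obtain ⟨c₁, hc₁⟩ := hχ₁ A hA
  obtain ⟨c₂, hc₂⟩ := hχ₂ A hA
  exact ⟨A, hA, a * s * c₂, b * s * c₁, t,
    contraction_elim_smul_kronecker_mulVec _ _ hc₁ hc₂ _ X _⟩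

/-- Lemma 5.7: Let `L` be connected reductive and `U₁ ≠ 0`, `U₂ ≠ 0`, `U₃`
rational `L`-modules.  If a Borel subgroup of `L × (ℂ*)²` (a product `B × (ℂ*)²` with `B`
a Borel subgroup of `L`, the two `ℂ*`-factors acting by scalars on `U₁ ⊗ U₂` and `U₃`)
has a dense orbit in `(U₁ ⊗ U₂) ⊕ U₃`, then a Borel subgroup of `L × (ℂ*)³` (the three
`ℂ*`-factors acting by scalars on `U₁`, `U₂`, `U₃`) has a dense orbit in `U₁ ⊕ U₂ ⊕ U₃`. -/
theorem stmt19 {N d₁ d₂ d₃ : ℕ} (hd₁ : 0 < d₁) (hd₂ : 0 < d₂)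
    (L : LinAlgGroup N) (hconn : IsZConnected L) (hred : IsReductive L)
    (ρ₁ : RationalRep L d₁) (ρ₂ : RationalRep L d₂) (ρ₃ : RationalRep L d₃)
    (hyp : ∃ B : LinAlgGroup N, IsBorel L B ∧
      ∃ (w : Fin d₁ × Fin d₂ → ℂ) (u₃ : Fin d₃ → ℂ),
        ZDense {x : (Fin d₁ × Fin d₂) ⊕ Fin d₃ → ℂ |
          ∃ A ∈ B.carrier, ∃ s t : ℂˣ,
            x = Sum.elim
              (fun pq => (s : ℂ) *
                (Matrix.of fun p q : Fin d₁ × Fin d₂ =>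
                  ρ₁.ρ A p.1 q.1 * ρ₂.ρ A p.2 q.2).mulVec w pq)
              (fun i => (t : ℂ) * (ρ₃.ρ A).mulVec u₃ i)}) :
    ∃ B : LinAlgGroup N, IsBorel L B ∧
      ∃ (u₁ : Fin d₁ → ℂ) (u₂ : Fin d₂ → ℂ) (u₃ : Fin d₃ → ℂ),
        ZDense {x : Fin d₁ ⊕ Fin d₂ ⊕ Fin d₃ → ℂ |
          ∃ A ∈ B.carrier, ∃ s t r : ℂˣ,
            x = Sum.elim (fun i => (s : ℂ) * (ρ₁.ρ A).mulVec u₁ i)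
                  (Sum.elim (fun j => (t : ℂ) * (ρ₂.ρ A).mulVec u₂ j)
                    (fun k => (r : ℂ) * (ρ₃.ρ A).mulVec u₃ k))} := by
  obtain ⟨B, hB, w, u₃, hw⟩ := hyp
  obtain ⟨u₁, u₂, hu⟩ := stmt19_general hd₁ hd₂ hB.2.1 hB.2.2.1
    (ρ₁.restrict hB.1) (ρ₂.restrict hB.1) (ρ₃.restrict hB.1) hw
  exact ⟨B, hB, u₁, u₂, u₃, hu⟩
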